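/- The configuration pairing descends to a perfect pairing between Lie(n) = Θ_n/J_n and Eil(n) = Γ_n/I_n: the induced bilinear pairing ⟨·,·⟩ : Eil(n) × Lie(n) → R is well defined and the induced maps Lie(n) → Hom_R(Eil(n), R) and Eil(n) → Hom_R(Lie(n), R) are isomorphisms. -/

import Mathlib

open scoped Classical

noncomputable section

namespace GTPairing

/-- Planar binary trees with natural-number-labeled leaves.  A `PTree` is a rooted
binary (trivalent) tree embedded in the upper half plane; `node l r` has `l` as its
left branch and `r` as its right branch. -/
inductive PTree : Type
  | leaf (a : ℕ) : PTree
  | node (l r : PTree) : PTree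
  deriving DecidableEq

namespace PTree

/-- The labels of the leaves, in planar (left-to-right) order. -/
def leaves : PTree → List ℕ
  | .leaf a => [a]
  | .node l r => l.leaves ++ r.leaves

/-- The internal (trivalent) vertices of a planar tree, recorded as the subtrees they
support, listed in the left-to-right (in-order) planar order. -/
def nodesList : PTree → List PTree
  | .leaf _ => []
  | .node l r => l.nodesList ++ (PTree.node l r :: r.nodesList)

/-- `nadir t i j` is the nadir (lowest vertex) of the shortest path in `t` between the
leaves labeled `i` and `j`, recorded as the subtree it supports, together with `true`
if the leaf labeled `i` lies over the left branch of the nadir (and `j` over the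
right), i.e. if the path travels from left to right at its nadir. -/
def nadir : PTree → ℕ → ℕ → Option (PTree × Bool)
  | .leaf _, _, _ => none
  | .node l r, i, j =>
    if i ∈ l.leaves ∧ j ∈ r.leaves then some (.node l r, true)
    else if j ∈ l.leaves ∧ i ∈ r.leaves then some (.node l r, false)
    else if i ∈ l.leaves ∧ j ∈ l.leaves then nadir l i j
    else if i ∈ r.leaves ∧ j ∈ r.leaves then nadir r i j
    else none

/-- Fusing: `graft t m s` identifies the root edge of `s` with the leaf edge of `t`
labeled by `m`, i.e. substitutes `s` for the leaf labeled `m`. -/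
def graft : PTree → ℕ → PTree → PTree
  | .leaf a, m, s => if a = m then s else .leaf a
  | .node l r, m, s => .node (l.graft m s) (r.graft m s)

/-- Relabel the leaves of a tree. -/
def relabel (f : ℕ → ℕ) : PTree → PTree
  | .leaf a => .leaf (f a)
  | .node l r => .node (l.relabel f) (r.relabel f)

end PTree

/-- The nadir of the path between the two endpoints of an edge, forgetting planar
direction data. -/
def nadirFst (t : PTree) (e : ℕ × ℕ) : Option PTree := (t.nadir e.1 e.2).map Prod.fst

/-- The (even) configuration pairing between a set of oriented edges `E` (a Graph) and
a planar binary tree `t` (a Tree): it is `0` unless `e ↦ β_{G,T}(e)` (sending an edge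
to the nadir of the path between the corresponding leaves) is a bijection from the
edges onto the internal vertices of `t`, in which case it is `(-1)^N` where `N` is the
number of edges `(i,j)` whose path travels from left to right (`i` over the left
branch) at its nadir. -/
def pairPT (E : Multiset (ℕ × ℕ)) (t : PTree) : ℤ :=
  if E.map (nadirFst t) = ((t.nodesList.map some : List (Option PTree)) : Multiset (Option PTree))
  then (-1) ^ (Multiset.card (E.filter (fun e => (t.nadir e.1 e.2).map Prod.snd = some true)))
  else 0

/-- A Tree with leaves labeled bijectively by the finite set `S`. -/
def IsTreeOn (S : Finset ℕ) (t : PTree) : Prop := t.leaves.Nodup ∧ t.leaves.toFinset = S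

def TreeOn (S : Finset ℕ) : Type := {t : PTree // IsTreeOn S t}

/-- Adjacency relation determined by a multiset of oriented edges. -/
def Adj (E : Multiset (ℕ × ℕ)) (a b : ℕ) : Prop := (a, b) ∈ E ∨ (b, a) ∈ E

/-- Connectivity of an edge multiset on the vertex set `S`. -/
def ConnOn (S : Finset ℕ) (E : Multiset (ℕ × ℕ)) : Prop :=
  ∀ a ∈ S, ∀ b ∈ S, Relation.ReflTransGen (Adj E) a b

/-- A Graph on the vertex set `S`: a connected graph with oriented edges (each edge
joining two distinct vertices of `S`). -/
def IsGraphOn (S : Finset ℕ) (E : Multiset (ℕ × ℕ)) : Prop :=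
  (∀ e ∈ E, e.1 ∈ S ∧ e.2 ∈ S ∧ e.1 ≠ e.2) ∧ ConnOn S E

def GraphOn (S : Finset ℕ) : Type := {E : Multiset (ℕ × ℕ) // IsGraphOn S E}

variable (R : Type) [CommRing R]

/-- `Θ_S`: the free module on Trees with leaves labeled by `S`. -/
abbrev ThetaF (S : Finset ℕ) : Type := TreeOn S →₀ R

/-- `Γ_S`: the free module on Graphs with vertices labeled by `S`. -/
abbrev GammaF (S : Finset ℕ) : Type := GraphOn S →₀ R

variable {R}

/-- The configuration pairing, extended bilinearly to the free modules. -/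
def pairGT {S : Finset ℕ} (β : GammaF R S) (α : ThetaF R S) : R :=
  β.sum fun G b => α.sum fun T a => b * a * ((pairPT G.1 T.1 : ℤ) : R)

/-- The basis element of a free module on a subtype, when the defining property holds
(and `0` otherwise; in all uses below the property does hold). -/
def bsingle {α : Type} (P : α → Prop) (a : α) : ({x : α // P x} →₀ R) :=
  if h : P a then Finsupp.single ⟨a, h⟩ (1 : R) else 0

variable (R)

/-- Jacobi combinations of Trees: the sum of the three Trees obtained from the unique
3-leaf Tree by fusing Trees `A`, `B`, `C` onto its three leaves in the three
cyclically related orders and fusing a Tree `D` onto its root (at the leaf `m` of `D`). -/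
def jacobiSet (S : Finset ℕ) : Set (ThetaF R S) :=
  { x | ∃ (D A B C : PTree) (m : ℕ) (T₁ T₂ T₃ : TreeOn S),
      D.leaves.Nodup ∧ m ∈ D.leaves ∧
      T₁.1 = D.graft m (.node (.node A B) C) ∧
      T₂.1 = D.graft m (.node (.node B C) A) ∧
      T₃.1 = D.graft m (.node (.node C A) B) ∧
      x = Finsupp.single T₁ 1 + Finsupp.single T₂ 1 + Finsupp.single T₃ 1 }

/-- Symmetry combinations of Trees: the sum of two Trees which are isomorphic as
labeled graphs and have the same planar ordering of input edges at every internal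
vertex except exactly one (here: exactly the vertex at the leaf `m` of `D`, whose two
branches `A` and `B` are switched). -/
def treeSymmSet (S : Finset ℕ) : Set (ThetaF R S) :=
  { x | ∃ (D A B : PTree) (m : ℕ) (T₁ T₂ : TreeOn S),
      D.leaves.Nodup ∧ m ∈ D.leaves ∧
      T₁.1 = D.graft m (.node A B) ∧
      T₂.1 = D.graft m (.node B A) ∧
      x = Finsupp.single T₁ 1 + Finsupp.single T₂ 1 }

/-- The submodule `J_S ⊆ Θ_S` generated by Jacobi and symmetry combinations. -/
def Jsub (S : Finset ℕ) : Submodule R (ThetaF R S) :=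
  Submodule.span R (jacobiSet R S ∪ treeSymmSet R S)

/-- Arnold combinations of Graphs: sums of three Graphs which agree except on edges
among three fixed distinct vertices `i`, `j`, `k`, where they contain respectively the
edge pairs `{i→j, j→k}`, `{j→k, k→i}` and `{k→i, i→j}`. -/
def arnoldSet (S : Finset ℕ) : Set (GammaF R S) :=
  { x | ∃ (i j k : ℕ) (E₀ : Multiset (ℕ × ℕ)) (G₁ G₂ G₃ : GraphOn S),
      i ≠ j ∧ j ≠ k ∧ i ≠ k ∧
      G₁.1 = (i, j) ::ₘ (j, k) ::ₘ E₀ ∧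
      G₂.1 = (j, k) ::ₘ (k, i) ::ₘ E₀ ∧
      G₃.1 = (k, i) ::ₘ (i, j) ::ₘ E₀ ∧
      x = Finsupp.single G₁ 1 + Finsupp.single G₂ 1 + Finsupp.single G₃ 1 }

/-- Symmetry combinations of Graphs: sums of two Graphs which differ only in the
orientation of exactly one edge. -/
def graphSymmSet (S : Finset ℕ) : Set (GammaF R S) :=
  { x | ∃ (i j : ℕ) (E₀ : Multiset (ℕ × ℕ)) (G₁ G₂ : GraphOn S),
      G₁.1 = (i, j) ::ₘ E₀ ∧ G₂.1 = (j, i) ::ₘ E₀ ∧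
      x = Finsupp.single G₁ 1 + Finsupp.single G₂ 1 }

/-- Graphs having two edges with the same pair of endpoints. -/
def doubledSet (S : Finset ℕ) : Set (GammaF R S) :=
  { x | ∃ (i j : ℕ) (E₀ : Multiset (ℕ × ℕ)) (G : GraphOn S),
      (G.1 = (i, j) ::ₘ (i, j) ::ₘ E₀ ∨ G.1 = (i, j) ::ₘ (j, i) ::ₘ E₀) ∧
      x = Finsupp.single G 1 }

/-- The submodule `I_S ⊆ Γ_S` generated by Arnold combinations, symmetry combinations
and Graphs with doubled edges. -/
def Isub (S : Finset ℕ) : Submodule R (GammaF R S) :=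
  Submodule.span R (arnoldSet R S ∪ graphSymmSet R S ∪ doubledSet R S)

/-- `Lie(S) = Θ_S / J_S`. -/
abbrev LieQ (S : Finset ℕ) : Type := ThetaF R S ⧸ Jsub R S

/-- `Eil(S) = Γ_S / I_S`. -/
abbrev EilQ (S : Finset ℕ) : Type := GammaF R S ⧸ Isub R S

end GTPairing

namespace GTPairing

/-! ### Part 1: recursive form of the pairing -/

def dct (L M : List ℕ) (E : Multiset (ℕ × ℕ)) : ℕ :=
  E.countP (fun e => e.1 ∈ L ∧ e.2 ∈ M)

def ins (L : List ℕ) (E : Multiset (ℕ × ℕ)) : Multiset (ℕ × ℕ) :=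
  E.filter (fun e => e.1 ∈ L ∧ e.2 ∈ L)

def pr : PTree → Multiset (ℕ × ℕ) → ℤ
  | .leaf _, _ => 1
  | .node l r, E =>
    if dct l.leaves r.leaves E + dct r.leaves l.leaves E = 1 then
      ((dct r.leaves l.leaves E : ℤ) - dct l.leaves r.leaves E) *
        pr l (ins l.leaves E) * pr r (ins r.leaves E)
    else 0

lemma dct_congr {L L' M M' : List ℕ} (h : ∀ x, x ∈ L ↔ x ∈ L') (h' : ∀ x, x ∈ M ↔ x ∈ M')
    (E : Multiset (ℕ × ℕ)) : dct L M E = dct L' M' E := by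
  unfold dct; simp only [h, h']

lemma ins_congr {L L' : List ℕ} (h : ∀ x, x ∈ L ↔ x ∈ L')
    (E : Multiset (ℕ × ℕ)) : ins L E = ins L' E := by
  unfold ins; simp only [h]

lemma dct_append_left {A B C : List ℕ} (h : List.Disjoint A B) (E : Multiset (ℕ × ℕ)) :
    dct (A ++ B) C E = dct A C E + dct B C E := by
  unfold dct
  induction E using Multiset.induction_on with
  | empty => simp
  | cons e E ih =>
    simp only [Multiset.countP_cons, ih]
    have := @h e.1
    by_cases h1 : e.1 ∈ A <;> by_cases h2 : e.1 ∈ B <;> by_cases h3 : e.2 ∈ C <;>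
      simp_all <;> omega

lemma dct_append_right {A B C : List ℕ} (h : List.Disjoint A B) (E : Multiset (ℕ × ℕ)) :
    dct C (A ++ B) E = dct C A E + dct C B E := by
  unfold dct
  induction E using Multiset.induction_on with
  | empty => simp
  | cons e E ih =>
    simp only [Multiset.countP_cons, ih]
    have := @h e.2
    by_cases h1 : e.2 ∈ A <;> by_cases h2 : e.2 ∈ B <;> by_cases h3 : e.1 ∈ C <;>
      simp_all <;> omega

lemma dct_ins {A B L : List ℕ} (hA : A ⊆ L) (hB : B ⊆ L) (E : Multiset (ℕ × ℕ)) :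
    dct A B (ins L E) = dct A B E := by
  unfold dct ins
  rw [Multiset.countP_filter]
  apply Multiset.countP_congr rfl
  intro e _
  have := @hA e.1; have := @hB e.2
  simp; tauto

lemma ins_ins {A L : List ℕ} (hA : A ⊆ L) (E : Multiset (ℕ × ℕ)) :
    ins A (ins L E) = ins A E := by
  unfold ins
  rw [Multiset.filter_filter]
  apply Multiset.filter_congr
  intro e _
  have := @hA e.1; have := @hA e.2
  tauto

lemma pr_symm (A B : PTree) (E : Multiset (ℕ × ℕ)) :
    pr (.node A B) E + pr (.node B A) E = 0 := by
  simp only [pr]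
  rw [add_comm (dct B.leaves A.leaves E)]
  split_ifs <;> ring

lemma jac_arith (a a' b b' c c' : ℕ) (x y z : ℤ) :
    (if (a + b) + (a' + b') = 1 then ((a' + b' : ℤ) - (a + b)) *
      (if c + c' = 1 then ((c' : ℤ) - c) * x * y else 0) * z else 0) +
    (if (c' + a') + (c + a) = 1 then ((c + a : ℤ) - (c' + a')) *
      (if b + b' = 1 then ((b' : ℤ) - b) * y * z else 0) * x else 0) +
    (if (b' + c) + (b + c') = 1 then ((b + c' : ℤ) - (b' + c)) *
      (if a' + a = 1 then ((a : ℤ) - a') * z * x else 0) * y else 0) = 0 := by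
  by_cases hc : c + c' = 1 <;> by_cases hb : b + b' = 1 <;> by_cases ha : a' + a = 1
  all_goals
    simp only [ha, hb, hc, if_true, if_false, mul_zero, zero_mul]
    try simp
  · rw [if_neg (by omega), if_neg (by omega), if_neg (by omega)]; simp
  · by_cases h0 : a + a' = 0
    · obtain ⟨rfl, rfl⟩ : a = 0 ∧ a' = 0 := by omega
      rw [if_pos (by omega), if_pos (by omega)]; push_cast; ring
    · rw [if_neg (by omega), if_neg (by omega)]; simp
  · by_cases h0 : b + b' = 0
    · obtain ⟨rfl, rfl⟩ : b = 0 ∧ b' = 0 := by omega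
      rw [if_pos (by omega), if_pos (by omega)]; push_cast; ring
    · rw [if_neg (by omega), if_neg (by omega)]; simp
  · intro h; exfalso; omega
  · by_cases h0 : c + c' = 0
    · obtain ⟨rfl, rfl⟩ : c = 0 ∧ c' = 0 := by omega
      rw [if_pos (by omega), if_pos (by omega)]; push_cast; ring
    · rw [if_neg (by omega), if_neg (by omega)]; simp
  all_goals omega

lemma pr_jacobi (A B C : PTree) (hAB : List.Disjoint A.leaves B.leaves)
    (hBC : List.Disjoint B.leaves C.leaves) (hCA : List.Disjoint C.leaves A.leaves)
    (E : Multiset (ℕ × ℕ)) :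
    pr (.node (.node A B) C) E + pr (.node (.node B C) A) E + pr (.node (.node C A) B) E = 0 := by
  simp only [pr, PTree.leaves]
  simp only [dct_append_left hAB, dct_append_left hBC, dct_append_left hCA,
    dct_append_right hAB, dct_append_right hBC, dct_append_right hCA]
  simp only [dct_ins (List.subset_append_left _ _) (List.subset_append_right _ _),
    dct_ins (List.subset_append_right _ _) (List.subset_append_left _ _),
    ins_ins (List.subset_append_left _ _), ins_ins (List.subset_append_right _ _)]
  have := jac_arith (dct A.leaves C.leaves E) (dct C.leaves A.leaves E) (dct B.leaves C.leaves E)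
    (dct C.leaves B.leaves E) (dct A.leaves B.leaves E) (dct B.leaves A.leaves E)
    (pr A (ins A.leaves E)) (pr B (ins B.leaves E)) (pr C (ins C.leaves E))
  push_cast
  convert this using 1

lemma graft_of_not_mem (D : PTree) (m : ℕ) (X : PTree) (h : m ∉ D.leaves) : D.graft m X = D := by
  induction D with
  | leaf a => simp [PTree.leaves] at h; simp [PTree.graft, Ne.symm h]
  | node l r hl hr => simp [PTree.leaves] at h; simp [PTree.graft, hl h.1, hr h.2]

lemma mem_graft_congr (D : PTree) (m : ℕ) {X Y : PTree} (h : ∀ x, x ∈ X.leaves ↔ x ∈ Y.leaves)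
    (x : ℕ) : x ∈ (D.graft m X).leaves ↔ x ∈ (D.graft m Y).leaves := by
  induction D with
  | leaf a => simp only [PTree.graft]; split_ifs <;> simp [h]
  | node l r hl hr => simp [PTree.graft, PTree.leaves, hl, hr]

lemma graft_perm (D : PTree) (m : ℕ) {X Y : PTree} (h : X.leaves.Perm Y.leaves) :
    (D.graft m X).leaves.Perm (D.graft m Y).leaves := by
  induction D with
  | leaf a => simp only [PTree.graft]; split_ifs <;> simp [h]
  | node l r hl hr => simpa [PTree.graft, PTree.leaves] using hl.append hr

lemma pr_graft {ι : Type} [Fintype ι] [Nonempty ι] (X : ι → PTree)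
    (hX : ∀ i j x, x ∈ (X i).leaves ↔ x ∈ (X j).leaves)
    (h0 : ∀ E, ∑ i, pr (X i) E = 0) (D : PTree) (m : ℕ) (hD : D.leaves.Nodup)
    (hm : m ∈ D.leaves) (E : Multiset (ℕ × ℕ)) : ∑ i, pr (D.graft m (X i)) E = 0 := by
  induction D generalizing E with
  | leaf a =>
    simp [PTree.leaves] at hm
    simp [PTree.graft, hm, h0]
  | node l r hl hr =>
    simp only [PTree.leaves, List.nodup_append', List.mem_append] at hD hm
    obtain ⟨dl, dr, dd⟩ := hD
    let i0 : ι := Classical.arbitrary ι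
    rcases hm with hm | hm
    · have hmr : m ∉ r.leaves := fun h => dd hm h
      have key : ∀ i, pr ((PTree.node l r).graft m (X i)) E =
        (if dct (l.graft m (X i0)).leaves r.leaves E + dct r.leaves (l.graft m (X i0)).leaves E = 1
        then ((dct r.leaves (l.graft m (X i0)).leaves E : ℤ)
          - dct (l.graft m (X i0)).leaves r.leaves E) * pr r (ins r.leaves E) else 0) *
          pr (l.graft m (X i)) (ins (l.graft m (X i0)).leaves E) := by
        intro i
        have hmem := mem_graft_congr l m (hX i i0)
        simp only [PTree.graft, graft_of_not_mem r m _ hmr, pr]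
        rw [dct_congr hmem (fun _ => Iff.rfl), dct_congr (fun _ => Iff.rfl) hmem, ins_congr hmem]
        split_ifs <;> ring
      simp only [key, ← Finset.mul_sum]
      rw [hl dl hm]; simp
    · have hmr : m ∉ l.leaves := fun h => dd h hm
      have key : ∀ i, pr ((PTree.node l r).graft m (X i)) E =
        (if dct l.leaves (r.graft m (X i0)).leaves E + dct (r.graft m (X i0)).leaves l.leaves E = 1
        then ((dct (r.graft m (X i0)).leaves l.leaves E : ℤ)
          - dct l.leaves (r.graft m (X i0)).leaves E) * pr l (ins l.leaves E) else 0) *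
          pr (r.graft m (X i)) (ins (r.graft m (X i0)).leaves E) := by
        intro i
        have hmem := mem_graft_congr r m (hX i i0)
        simp only [PTree.graft, graft_of_not_mem l m _ hmr, pr]
        rw [dct_congr hmem (fun _ => Iff.rfl), dct_congr (fun _ => Iff.rfl) hmem, ins_congr hmem]
        split_ifs <;> ring
      simp only [key, ← Finset.mul_sum]
      rw [hr dr hm]; simp

lemma graft_nodup_sub (D : PTree) (m : ℕ) (X : PTree) (hm : m ∈ D.leaves)
    (h : (D.graft m X).leaves.Nodup) : X.leaves.Nodup := by
  induction D with
  | leaf a => simp [PTree.leaves] at hm; simpa [PTree.graft, hm] using h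
  | node l r hl hr =>
    simp only [PTree.graft, PTree.leaves, List.nodup_append', List.mem_append] at h hm
    rcases hm with hm | hm
    · exact hl hm h.1
    · exact hr hm h.2.1


/-! ### Part 2: nadirs and the comparison of `pairPT` with `pr` -/

lemma leaves_ne_nil (t : PTree) : t.leaves ≠ [] := by
  induction t with
  | leaf a => simp [PTree.leaves]
  | node l r hl hr => simp [PTree.leaves, hl]

lemma nodes_leaves_sub (t x : PTree) (h : x ∈ t.nodesList) : x.leaves ⊆ t.leaves := by
  induction t with
  | leaf a => simp [PTree.nodesList] at h
  | node l r hl hr =>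
    simp only [PTree.nodesList, List.mem_append, List.mem_cons] at h
    rcases h with h | h | h
    · exact List.Subset.trans (hl h) (by simp [PTree.leaves])
    · subst h; exact fun _ h => h
    · exact List.Subset.trans (hr h) (by simp [PTree.leaves])

lemma nodes_nodup (t : PTree) (h : t.leaves.Nodup) : t.nodesList.Nodup := by
  induction t with
  | leaf a => simp [PTree.nodesList]
  | node l r hl hr =>
    simp only [PTree.leaves, List.nodup_append'] at h
    obtain ⟨dl, dr, dd⟩ := h
    obtain ⟨xl, hxl⟩ := List.exists_mem_of_ne_nil _ (leaves_ne_nil l)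
    obtain ⟨xr, hxr⟩ := List.exists_mem_of_ne_nil _ (leaves_ne_nil r)
    simp only [PTree.nodesList, List.nodup_append', List.nodup_cons]
    refine ⟨hl dl, ⟨?_, hr dr⟩, ?_⟩
    · intro hm
      exact dd hxl (nodes_leaves_sub _ _ hm (by simp [PTree.leaves, hxl]))
    · intro x hx hx'
      rcases List.mem_cons.1 hx' with rfl | hx'
      · exact dd (nodes_leaves_sub _ _ hx (by simp [PTree.leaves, hxr])) hxr
      · obtain ⟨y, hy⟩ := List.exists_mem_of_ne_nil _ (leaves_ne_nil x)
        exact dd (nodes_leaves_sub _ _ hx hy) (nodes_leaves_sub _ _ hx' hy)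

lemma nadir_some (t : PTree) (h : t.leaves.Nodup) (i j : ℕ) (hi : i ∈ t.leaves) (hj : j ∈ t.leaves)
    (hij : i ≠ j) : ∃ x b, t.nadir i j = some (x, b) ∧ x ∈ t.nodesList := by
  induction t with
  | leaf a => simp [PTree.leaves] at hi hj; omega
  | node l r hl hr =>
    simp only [PTree.leaves, List.nodup_append', List.mem_append] at h hi hj
    obtain ⟨dl, dr, dd⟩ := h
    have d1 := @dd i
    have d2 := @dd j
    simp only [PTree.nadir, PTree.nodesList, List.mem_append, List.mem_cons]
    split_ifs with h1 h2 h3 h4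
    · exact ⟨_, _, rfl, by simp⟩
    · exact ⟨_, _, rfl, by simp⟩
    · obtain ⟨x, b, h, h'⟩ := hl dl h3.1 h3.2
      exact ⟨x, b, h, Or.inl h'⟩
    · obtain ⟨x, b, h, h'⟩ := hr dr h4.1 h4.2
      exact ⟨x, b, h, Or.inr (Or.inr h')⟩
    · tauto

lemma nadir_swap (t : PTree) (h : t.leaves.Nodup) (i j : ℕ) :
    t.nadir j i = (t.nadir i j).map (fun p => (p.1, !p.2)) := by
  induction t with
  | leaf a => simp [PTree.nadir]
  | node l r hl hr =>
    simp only [PTree.leaves, List.nodup_append'] at h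
    obtain ⟨dl, dr, dd⟩ := h
    have d1 := @dd i
    have d2 := @dd j
    simp only [PTree.nadir]
    rw [hl dl, hr dr]
    by_cases a1 : i ∈ l.leaves <;> by_cases a2 : j ∈ l.leaves <;>
    by_cases a3 : i ∈ r.leaves <;> by_cases a4 : j ∈ r.leaves <;> simp_all

def Tri (t : PTree) (a b c : ℕ) : Prop :=
  ∃ w v s ε, t.nadir a b = some (w, s) ∧ t.nadir b c = some (v, ε) ∧ t.nadir c a = some (v, !ε)

lemma tri (t : PTree) (h : t.leaves.Nodup) (i j k : ℕ) (hi : i ∈ t.leaves) (hj : j ∈ t.leaves)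
    (hk : k ∈ t.leaves) (hij : i ≠ j) (hjk : j ≠ k) (hik : i ≠ k) :
    Tri t i j k ∨ Tri t j k i ∨ Tri t k i j := by
  induction t with
  | leaf a => simp [PTree.leaves] at hi hj; omega
  | node l r hl hr =>
    simp only [PTree.leaves, List.nodup_append', List.mem_append] at h hi hj hk
    obtain ⟨dl, dr, dd⟩ := h
    have d1 := @dd i
    have d2 := @dd j
    have d3 := @dd k
    have two : ∀ a b c, a ≠ b → a ∈ l.leaves → b ∈ l.leaves → c ∈ r.leaves →
        Tri (.node l r) a b c := by
      intro a b c hab ha hb hc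
      have := @dd a
      have := @dd b
      have := @dd c
      obtain ⟨x, s, e, _⟩ := nadir_some l dl a b ha hb hab
      exact ⟨x, .node l r, s, true, by simp_all [PTree.nadir], by simp_all [PTree.nadir],
        by simp_all [PTree.nadir]⟩
    have two' : ∀ a b c, a ≠ b → a ∈ r.leaves → b ∈ r.leaves → c ∈ l.leaves →
        Tri (.node l r) a b c := by
      intro a b c hab ha hb hc
      have := @dd a
      have := @dd b
      have := @dd c
      obtain ⟨x, s, e, _⟩ := nadir_some r dr a b ha hb hab
      exact ⟨x, .node l r, s, false, by simp_all [PTree.nadir], by simp_all [PTree.nadir],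
        by simp_all [PTree.nadir]⟩
    rcases hi with hi | hi <;> rcases hj with hj | hj <;> rcases hk with hk | hk
    · have d1 : i ∉ r.leaves := d1 hi
      have d2 : j ∉ r.leaves := d2 hj
      have d3 : k ∉ r.leaves := d3 hk
      simpa [Tri, PTree.nadir, hi, hj, hk, d1, d2, d3] using hl dl hi hj hk
    · exact Or.inl (two _ _ _ hij hi hj hk)
    · exact Or.inr (Or.inr (two _ _ _ hik.symm hk hi hj))
    · exact Or.inr (Or.inl (two' _ _ _ hjk hj hk hi))
    · exact Or.inr (Or.inl (two _ _ _ hjk hj hk hi))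
    · exact Or.inr (Or.inr (two' _ _ _ hik.symm hk hi hj))
    · exact Or.inl (two' _ _ _ hij hi hj hk)
    · have d1 : i ∉ l.leaves := fun h => d1 h hi
      have d2 : j ∉ l.leaves := fun h => d2 h hj
      have d3 : k ∉ l.leaves := fun h => d3 h hk
      simpa [Tri, PTree.nadir, hi, hj, hk, d1, d2, d3] using hr dr hi hj hk

lemma pairPT_double (t : PTree) (h : t.leaves.Nodup) (e e' : ℕ × ℕ) (E : Multiset (ℕ × ℕ))
    (he : nadirFst t e = nadirFst t e') : pairPT (e ::ₘ e' ::ₘ E) t = 0 := by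
  unfold pairPT
  rw [if_neg]
  intro hE
  have nd : ((t.nodesList.map some : List (Option PTree)) : Multiset (Option PTree)).Nodup := by
    simpa using (nodes_nodup t h).map (Option.some_injective _)
  rw [← hE] at nd
  simp [he] at nd

lemma pairPT_flip (t : PTree) (e e' : ℕ × ℕ) (E : Multiset (ℕ × ℕ)) (v : PTree) (b : Bool)
    (he : t.nadir e.1 e.2 = some (v, b)) (he' : t.nadir e'.1 e'.2 = some (v, !b)) :
    pairPT (e ::ₘ E) t + pairPT (e' ::ₘ E) t = 0 := by
  unfold pairPT
  simp only [Multiset.map_cons, nadirFst, he, he', Option.map_some, Multiset.filter_cons]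
  split_ifs with h h1 h2 h2
  · cases b <;> simp_all
  · simp [pow_add]
  · simp [pow_add]
  · cases b <;> simp_all
  · rfl

lemma pairPT_arnold_tri (t : PTree) (h : t.leaves.Nodup) (i j k : ℕ) (E : Multiset (ℕ × ℕ))
    (ht : Tri t i j k) :
    pairPT ((i, j) ::ₘ (j, k) ::ₘ E) t + pairPT ((j, k) ::ₘ (k, i) ::ₘ E) t +
      pairPT ((k, i) ::ₘ (i, j) ::ₘ E) t = 0 := by
  obtain ⟨w, v, s, ε, h1, h2, h3⟩ := ht
  rw [pairPT_double t h (j, k) (k, i) E (by simp [nadirFst, h2, h3]),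
    Multiset.cons_swap (i, j), add_zero]
  exact pairPT_flip t _ _ _ v ε h2 h3

lemma pairPT_arnold (t : PTree) (h : t.leaves.Nodup) (i j k : ℕ) (E : Multiset (ℕ × ℕ))
    (hi : i ∈ t.leaves) (hj : j ∈ t.leaves)
    (hk : k ∈ t.leaves) (hij : i ≠ j) (hjk : j ≠ k) (hik : i ≠ k) :
    pairPT ((i, j) ::ₘ (j, k) ::ₘ E) t + pairPT ((j, k) ::ₘ (k, i) ::ₘ E) t +
      pairPT ((k, i) ::ₘ (i, j) ::ₘ E) t = 0 := by
  rcases tri t h i j k hi hj hk hij hjk hik with ht | ht | ht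
  · exact pairPT_arnold_tri t h i j k E ht
  · linarith [pairPT_arnold_tri t h _ _ _ E ht]
  · linarith [pairPT_arnold_tri t h _ _ _ E ht]

lemma split_edges {L M : List ℕ} (hd : List.Disjoint L M) (E : Multiset (ℕ × ℕ))
    (hE : ∀ e ∈ E, e.1 ∈ L ++ M ∧ e.2 ∈ L ++ M) :
    E = ins L E + E.filter (fun e => e.1 ∈ L ∧ e.2 ∈ M) +
      E.filter (fun e => e.1 ∈ M ∧ e.2 ∈ L) + ins M E := by
  unfold ins
  induction E using Multiset.induction_on with
  | empty => simp
  | cons e E ih =>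
    have ih := ih (fun e h => hE e (Multiset.mem_cons_of_mem h))
    have h0 := hE e (Multiset.mem_cons_self _ _)
    simp only [List.mem_append] at h0
    have d1 := @hd e.1
    have d2 := @hd e.2
    have d1' : e.1 ∈ M → e.1 ∉ L := fun h h' => d1 h' h
    have d2' : e.2 ∈ M → e.2 ∉ L := fun h h' => d2 h' h
    rcases h0 with ⟨h1 | h1, h2 | h2⟩
    · rw [Multiset.filter_cons_of_pos _ (by tauto), Multiset.filter_cons_of_neg _ (by tauto),
        Multiset.filter_cons_of_neg _ (by tauto), Multiset.filter_cons_of_neg _ (by tauto)]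
      conv_lhs => rw [ih]
      simp
    · rw [Multiset.filter_cons_of_neg _ (by tauto), Multiset.filter_cons_of_pos _ (by tauto),
        Multiset.filter_cons_of_neg _ (by tauto), Multiset.filter_cons_of_neg _ (by tauto)]
      conv_lhs => rw [ih]
      simp
    · rw [Multiset.filter_cons_of_neg _ (by tauto), Multiset.filter_cons_of_neg _ (by tauto),
        Multiset.filter_cons_of_pos _ (by tauto), Multiset.filter_cons_of_neg _ (by tauto)]
      conv_lhs => rw [ih]
      simp
    · rw [Multiset.filter_cons_of_neg _ (by tauto), Multiset.filter_cons_of_neg _ (by tauto),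
        Multiset.filter_cons_of_neg _ (by tauto), Multiset.filter_cons_of_pos _ (by tauto)]
      conv_lhs => rw [ih]
      simp

lemma ms_split {α : Type} (P Q : α → Prop) (A B A' B' : Multiset α) (n : α) (k : ℕ)
    (hA : ∀ x ∈ A, P x) (hA' : ∀ x ∈ A', P x) (hB : ∀ x ∈ B, Q x) (hB' : ∀ x ∈ B', Q x)
    (hPQ : ∀ x, P x → ¬ Q x) (hP : ¬ P n) (hQ : ¬ Q n) :
    A + Multiset.replicate k n + B = A' + {n} + B' ↔ (A = A' ∧ B = B' ∧ k = 1) := by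
  constructor
  · intro h
    have e1 := congrArg (Multiset.filter P) h
    have e2 := congrArg (Multiset.filter Q) h
    have f1 : Multiset.filter P (Multiset.replicate k n) = 0 := by
      rw [Multiset.filter_eq_nil]; intro x hx; rw [Multiset.eq_of_mem_replicate hx]; exact hP
    have f2 : Multiset.filter Q (Multiset.replicate k n) = 0 := by
      rw [Multiset.filter_eq_nil]; intro x hx; rw [Multiset.eq_of_mem_replicate hx]; exact hQ
    have fn : ∀ B : Multiset α, (∀ x ∈ B, Q x) → Multiset.filter P B = 0 := fun B hB => by
      rw [Multiset.filter_eq_nil]; exact fun x hx hp => hPQ x hp (hB x hx)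
    have fn' : ∀ B : Multiset α, (∀ x ∈ B, P x) → Multiset.filter Q B = 0 := fun B hB => by
      rw [Multiset.filter_eq_nil]; exact fun x hx hp => hPQ x (hB x hx) hp
    simp only [Multiset.filter_add, Multiset.filter_singleton, f1, f2, fn B hB, fn B' hB',
      fn' A hA, fn' A' hA', Multiset.filter_eq_self.2 hA, Multiset.filter_eq_self.2 hB,
      Multiset.filter_eq_self.2 hA', Multiset.filter_eq_self.2 hB', hP, hQ, if_false] at e1 e2
    simp at e1 e2
    refine ⟨e1, e2, ?_⟩
    have := congrArg Multiset.card h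
    simp [e1, e2] at this
    omega
  · rintro ⟨rfl, rfl, rfl⟩
    simp

lemma pairPT_eq_pr (t : PTree) (h : t.leaves.Nodup) (E : Multiset (ℕ × ℕ))
    (hE : ∀ e ∈ E, e.1 ∈ t.leaves ∧ e.2 ∈ t.leaves ∧ e.1 ≠ e.2) : pairPT E t = pr t E := by
  induction t generalizing E with
  | leaf a =>
    have : E = 0 := by
      apply Multiset.eq_zero_of_forall_notMem
      intro e he
      have := hE e he
      simp [PTree.leaves] at this
      omega
    subst this
    simp [pairPT, pr, PTree.nodesList]
  | node l r hl hr =>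
    have h' := h
    simp only [PTree.leaves, List.nodup_append'] at h
    obtain ⟨dl, dr, dd⟩ := h
    have dd' : ∀ x, x ∈ r.leaves → x ∉ l.leaves := fun x h h' => dd h' h
    have dd2 : ∀ x, x ∈ l.leaves → x ∉ r.leaves := fun x h h' => dd h h'
    have hsp := split_edges dd E (fun e he => ⟨(hE e he).1, (hE e he).2.1⟩)
    set X := E.filter (fun e => e.1 ∈ l.leaves ∧ e.2 ∈ r.leaves) with hX
    set Y := E.filter (fun e => e.1 ∈ r.leaves ∧ e.2 ∈ l.leaves) with hY
    have hcX : dct l.leaves r.leaves E = Multiset.card X := by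
      rw [hX, dct, Multiset.countP_eq_card_filter]
    have hcY : dct r.leaves l.leaves E = Multiset.card Y := by
      rw [hY, dct, Multiset.countP_eq_card_filter]
    have mL : ∀ e ∈ ins l.leaves E, e.1 ∈ l.leaves ∧ e.2 ∈ l.leaves ∧ e.1 ≠ e.2 := by
      intro e he
      simp only [ins, Multiset.mem_filter] at he
      exact ⟨he.2.1, he.2.2, (hE e he.1).2.2⟩
    have mR : ∀ e ∈ ins r.leaves E, e.1 ∈ r.leaves ∧ e.2 ∈ r.leaves ∧ e.1 ≠ e.2 := by
      intro e he
      simp only [ins, Multiset.mem_filter] at he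
      exact ⟨he.2.1, he.2.2, (hE e he.1).2.2⟩
    have nL : ∀ e ∈ ins l.leaves E, (PTree.node l r).nadir e.1 e.2 = l.nadir e.1 e.2 := by
      intro e he
      obtain ⟨h1, h2, _⟩ := mL e he
      simp [PTree.nadir, h1, h2, dd2 _ h1, dd2 _ h2]
    have nR : ∀ e ∈ ins r.leaves E, (PTree.node l r).nadir e.1 e.2 = r.nadir e.1 e.2 := by
      intro e he
      obtain ⟨h1, h2, _⟩ := mR e he
      simp [PTree.nadir, h1, h2, dd' _ h1, dd' _ h2]
    have nX : ∀ e ∈ X, (PTree.node l r).nadir e.1 e.2 = some (.node l r, true) := by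
      intro e he
      simp only [hX, Multiset.mem_filter] at he
      simp [PTree.nadir, he.2.1, he.2.2]
    have nY : ∀ e ∈ Y, (PTree.node l r).nadir e.1 e.2 = some (.node l r, false) := by
      intro e he
      simp only [hY, Multiset.mem_filter] at he
      simp [PTree.nadir, he.2.1, he.2.2, dd' _ he.2.1]
    have cond : E.map (nadirFst (.node l r)) =
        (((PTree.node l r).nodesList.map some : List (Option PTree)) : Multiset (Option PTree)) ↔
        ((ins l.leaves E).map (nadirFst l) =
          ((l.nodesList.map some : List (Option PTree)) : Multiset (Option PTree)) ∧
        (ins r.leaves E).map (nadirFst r) =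
          ((r.nodesList.map some : List (Option PTree)) : Multiset (Option PTree)) ∧
        Multiset.card X + Multiset.card Y = 1) := by
      rw [← ms_split (fun o => ∃ x, o = some x ∧ x.leaves ⊆ l.leaves)
        (fun o => ∃ x, o = some x ∧ x.leaves ⊆ r.leaves) _ _ _ _ (some (.node l r))]
      · conv_lhs => rw [hsp]
        have e1 : (ins l.leaves E).map (nadirFst (.node l r)) =
            (ins l.leaves E).map (nadirFst l) :=
          Multiset.map_congr rfl (fun e he => by simp [nadirFst, nL e he])
        have e2 : (ins r.leaves E).map (nadirFst (.node l r)) =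
            (ins r.leaves E).map (nadirFst r) :=
          Multiset.map_congr rfl (fun e he => by simp [nadirFst, nR e he])
        have e3 : X.map (nadirFst (.node l r)) =
            Multiset.replicate (Multiset.card X) (some (.node l r)) := by
          rw [← Multiset.map_const']
          exact Multiset.map_congr rfl (fun e he => by simp [nadirFst, nX e he])
        have e4 : Y.map (nadirFst (.node l r)) =
            Multiset.replicate (Multiset.card Y) (some (.node l r)) := by
          rw [← Multiset.map_const']
          exact Multiset.map_congr rfl (fun e he => by simp [nadirFst, nY e he])
        have e5 : (((PTree.node l r).nodesList.map some : List (Option PTree)) :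
            Multiset (Option PTree)) =
            ((l.nodesList.map some : List (Option PTree)) : Multiset (Option PTree)) +
            {some (.node l r)} +
            ((r.nodesList.map some : List (Option PTree)) : Multiset (Option PTree)) := by
          simp only [PTree.nodesList, List.map_append, List.map_cons, ← Multiset.coe_add,
            ← Multiset.cons_coe, ← Multiset.singleton_add, add_assoc]
        rw [Multiset.map_add, Multiset.map_add, Multiset.map_add, e1, e2, e3, e4, e5,
          Multiset.replicate_add]
        simp only [add_assoc]
      · intro o ho
        obtain ⟨e, he, rfl⟩ := Multiset.mem_map.1 ho
        obtain ⟨h1, h2, h3⟩ := mL e he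
        obtain ⟨x, b, hx, hx'⟩ := nadir_some l dl _ _ h1 h2 h3
        exact ⟨x, by simp [nadirFst, hx], nodes_leaves_sub _ _ hx'⟩
      · intro o ho
        simp only [Multiset.mem_coe, List.mem_map] at ho
        obtain ⟨x, hx, rfl⟩ := ho
        exact ⟨x, rfl, nodes_leaves_sub _ _ hx⟩
      · intro o ho
        obtain ⟨e, he, rfl⟩ := Multiset.mem_map.1 ho
        obtain ⟨h1, h2, h3⟩ := mR e he
        obtain ⟨x, b, hx, hx'⟩ := nadir_some r dr _ _ h1 h2 h3
        exact ⟨x, by simp [nadirFst, hx], nodes_leaves_sub _ _ hx'⟩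
      · intro o ho
        simp only [Multiset.mem_coe, List.mem_map] at ho
        obtain ⟨x, hx, rfl⟩ := ho
        exact ⟨x, rfl, nodes_leaves_sub _ _ hx⟩
      · rintro o ⟨x, rfl, hx⟩ ⟨y, hy, hy'⟩
        simp at hy
        subst hy
        obtain ⟨z, hz⟩ := List.exists_mem_of_ne_nil _ (leaves_ne_nil x)
        exact dd (hx hz) (hy' hz)
      · rintro ⟨x, hx, hx'⟩
        simp at hx
        subst hx
        obtain ⟨z, hz⟩ := List.exists_mem_of_ne_nil _ (leaves_ne_nil r)
        exact dd (hx' (by simp [PTree.leaves, hz])) hz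
      · rintro ⟨x, hx, hx'⟩
        simp at hx
        subst hx
        obtain ⟨z, hz⟩ := List.exists_mem_of_ne_nil _ (leaves_ne_nil l)
        exact dd hz (hx' (by simp [PTree.leaves, hz]))
    have sgn : Multiset.card (E.filter
          (fun e => ((PTree.node l r).nadir e.1 e.2).map Prod.snd = some true)) =
        Multiset.card ((ins l.leaves E).filter
          (fun e => (l.nadir e.1 e.2).map Prod.snd = some true)) + Multiset.card X +
        Multiset.card ((ins r.leaves E).filter
          (fun e => (r.nadir e.1 e.2).map Prod.snd = some true)) := by
      conv_lhs => rw [hsp]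
      simp only [Multiset.filter_add, Multiset.card_add]
      rw [Multiset.filter_congr (s := ins l.leaves E) (fun e he => by rw [nL e he]),
        Multiset.filter_congr (s := ins r.leaves E) (fun e he => by rw [nR e he]),
        (Multiset.filter_eq_self (s := X)).2 (fun e he => by simp [nX e he]),
        (Multiset.filter_eq_nil (s := Y)).2 (fun e he => by simp [nY e he])]
      simp
    have il := hl dl _ mL
    have ir := hr dr _ mR
    rw [pr, ← il, ← ir, hcX, hcY, pairPT, sgn]
    simp only [cond]
    unfold pairPT
    by_cases c3 : Multiset.card X + Multiset.card Y = 1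
    · have : (-1 : ℤ) ^ (Multiset.card X) = (Multiset.card Y : ℤ) - Multiset.card X := by
        obtain ⟨a, b⟩ | ⟨a, b⟩ : (Multiset.card X = 0 ∧ Multiset.card Y = 1) ∨
          (Multiset.card X = 1 ∧ Multiset.card Y = 0) := by omega
        all_goals simp [a, b]
      rw [← this]
      split_ifs <;> first | (simp [pow_add]; done) | (simp [pow_add]; ring) | tauto
    · simp [c3]


/-! ### Part 3: combs and long graphs, duality -/

def comb : List ℕ → PTree
  | [] => .leaf 0
  | [a] => .leaf a
  | a :: b :: l => .node (comb (b :: l)) (.leaf a)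

def pathE : List ℕ → Multiset (ℕ × ℕ)
  | [] => 0
  | [_] => 0
  | a :: b :: l => (b, a) ::ₘ pathE (b :: l)

lemma comb_leaves (a : ℕ) (l : List ℕ) : (comb (a :: l)).leaves = (a :: l).reverse := by
  induction l generalizing a with
  | nil => simp [comb, PTree.leaves]
  | cons b l ih => simp [comb, PTree.leaves, ih]

lemma mem_comb_leaves (a : ℕ) (l : List ℕ) (x : ℕ) : x ∈ (comb (a :: l)).leaves ↔ x ∈ a :: l := by
  rw [comb_leaves, List.mem_reverse]

lemma pathE_mem (w : List ℕ) (e : ℕ × ℕ) (h : e ∈ pathE w) : e.1 ∈ w ∧ e.2 ∈ w := by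
  induction w with
  | nil => simp [pathE] at h
  | cons a l ih =>
    cases l with
    | nil => simp [pathE] at h
    | cons b l =>
      simp only [pathE, Multiset.mem_cons] at h
      rcases h with rfl | h
      · simp
      · exact ⟨List.mem_cons_of_mem _ (ih h).1, List.mem_cons_of_mem _ (ih h).2⟩

lemma pathE_ne (w : List ℕ) (hw : w.Nodup) (e : ℕ × ℕ) (h : e ∈ pathE w) : e.1 ≠ e.2 := by
  induction w with
  | nil => simp [pathE] at h
  | cons a l ih =>
    cases l with
    | nil => simp [pathE] at h
    | cons b l =>
      simp only [pathE, Multiset.mem_cons] at h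
      rcases h with rfl | h
      · simp at hw; simp; tauto
      · exact ih (List.nodup_cons.1 hw).2 h

lemma pathE_out (w : List ℕ) (a : ℕ) (ha : a ∈ w) (h : w.head? ≠ some a) :
    ∃ x, (a, x) ∈ pathE w := by
  induction w with
  | nil => simp at ha
  | cons c l ih =>
    cases l with
    | nil => simp_all
    | cons b l =>
      by_cases hb : b = a
      · subst hb; exact ⟨c, by simp [pathE]⟩
      · have : a ∈ b :: l := by
          rcases List.mem_cons.1 ha with rfl | h'
          · simp at h
          · exact h'
        obtain ⟨x, hx⟩ := ih this (by simpa using hb)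
        exact ⟨x, by simp [pathE, hx]⟩

lemma pathE_in (w : List ℕ) (a : ℕ) (ha : a ∈ w) (h : w.getLast? ≠ some a) :
    ∃ x, (x, a) ∈ pathE w := by
  induction w with
  | nil => simp at ha
  | cons c l ih =>
    cases l with
    | nil => simp_all
    | cons b l =>
      rcases List.mem_cons.1 ha with rfl | h'
      · exact ⟨b, by simp [pathE]⟩
      · obtain ⟨x, hx⟩ := ih h' (by simpa [List.getLast?_cons_cons] using h)
        exact ⟨x, by simp [pathE, hx]⟩

lemma ins_path (L : List ℕ) (a b : ℕ) (l : List ℕ) (hL : ∀ x, x ∈ b :: l → x ∈ L) (ha : a ∉ L) :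
    ins L (pathE (a :: b :: l)) = pathE (b :: l) := by
  unfold ins
  simp only [pathE]
  rw [Multiset.filter_cons_of_neg _ (by simp [ha]), Multiset.filter_eq_self]
  intro e he
  have := pathE_mem _ e he
  exact ⟨hL _ this.1, hL _ this.2⟩

lemma pr_node_leaf (t : PTree) (a : ℕ) (E : Multiset (ℕ × ℕ)) :
    pr (.node t (.leaf a)) E = if dct t.leaves [a] E + dct [a] t.leaves E = 1 then
      ((dct [a] t.leaves E : ℤ) - dct t.leaves [a] E) * pr t (ins t.leaves E) else 0 := by
  rw [pr, pr, mul_one]; rfl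

lemma pr_self (w : List ℕ) (hw : w.Nodup) : pr (comb w) (pathE w) = (-1) ^ (w.length - 1) := by
  induction w with
  | nil => simp [comb, pr]
  | cons a l ih =>
    cases l with
    | nil => simp [comb, pr]
    | cons b l =>
      have ih := ih (List.nodup_cons.1 hw).2
      have ha : a ∉ b :: l := (List.nodup_cons.1 hw).1
      have ha' : a ∉ (comb (b :: l)).leaves := by rwa [mem_comb_leaves]
      have c1 : dct (comb (b :: l)).leaves [a] (pathE (a :: b :: l)) = 1 := by
        unfold dct
        rw [pathE, Multiset.countP_cons_of_pos _ (by simp [mem_comb_leaves]),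
          Multiset.countP_eq_zero.2]
        intro e he h
        have h2 := (pathE_mem _ e he).2
        rw [List.mem_singleton.1 h.2] at h2
        exact ha h2
      have c2 : dct [a] (comb (b :: l)).leaves (pathE (a :: b :: l)) = 0 := by
        unfold dct
        rw [pathE, Multiset.countP_cons_of_neg _ (by simp [ha']),
          Multiset.countP_eq_zero.2]
        intro e he h
        have h2 := (pathE_mem _ e he).1
        rw [List.mem_singleton.1 h.1] at h2
        exact ha h2
      rw [comb, pr_node_leaf]
      rw [c1, c2, ins_path _ _ _ _ (fun x hx => (mem_comb_leaves _ _ _).2 hx) ha', ih]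
      simp [pow_succ]

lemma pr_off (w' w : List ℕ) (hw : w.Nodup) (hw' : w'.Nodup) (h : w.getLast? = some 0)
    (h' : w'.getLast? = some 0) (hm : ∀ x, x ∈ w ↔ x ∈ w') (hp : pr (comb w') (pathE w) ≠ 0) :
    w = w' := by
  induction w' generalizing w with
  | nil => simp at h'
  | cons a l' ih =>
    cases l' with
    | nil =>
      have hperm : w.Perm [a] := (List.perm_ext_iff_of_nodup hw hw').2 hm
      exact List.perm_singleton.1 hperm
    | cons b l' =>
      have ha : a ∉ b :: l' := (List.nodup_cons.1 hw').1
      have ha' : a ∉ (comb (b :: l')).leaves := by rwa [mem_comb_leaves]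
      have hlast : (b :: l').getLast? = some 0 := by simpa [List.getLast?_cons_cons] using h'
      have ha0 : a ≠ 0 := by
        rintro rfl
        exact ha (List.mem_of_getLast? hlast)
      rw [comb, pr_node_leaf] at hp
      by_cases hN : dct (comb (b :: l')).leaves [a] (pathE w) +
        dct [a] (comb (b :: l')).leaves (pathE w) = 1
      · rw [if_pos hN] at hp
        by_cases hh : w.head? = some a
        · obtain ⟨t, rfl⟩ : ∃ t, w = a :: t := by
            cases w with
            | nil => simp at hh
            | cons c t => simp at hh; exact ⟨t, by rw [hh]⟩
          cases t with
          | nil => simp at h; exact absurd h ha0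
          | cons d t =>
            have had : a ∉ d :: t := (List.nodup_cons.1 hw).1
            have hmm : ∀ x, x ∈ d :: t ↔ x ∈ b :: l' := by
              intro x
              have := hm x
              rw [List.mem_cons, List.mem_cons (b := a)] at this
              constructor
              · intro hx
                have hxa : x ≠ a := by rintro rfl; exact had hx
                tauto
              · intro hx
                have hxa : x ≠ a := by rintro rfl; exact ha hx
                tauto
            rw [ins_path _ _ _ _ (fun x hx => (mem_comb_leaves _ _ _).2 ((hmm x).1 hx)) ha'] at hp
            rw [ih (d :: t) (List.nodup_cons.1 hw).2 (List.nodup_cons.1 hw').2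
              (by simpa [List.getLast?_cons_cons] using h) hlast hmm
              (fun h0 => hp (by simp [h0]))]
        · exfalso
          have haw : a ∈ w := (hm a).2 (by simp)
          have key : ∀ x, x ∈ w → x ≠ a → x ∈ (comb (b :: l')).leaves := by
            intro x hx hxa
            rw [mem_comb_leaves]
            exact (List.mem_cons.1 ((hm x).1 hx)).resolve_left hxa
          obtain ⟨x, hx⟩ := pathE_out w a haw hh
          obtain ⟨y, hy⟩ := pathE_in w a haw (by rw [h]; simpa using ha0.symm)
          have c1 : 0 < dct [a] (comb (b :: l')).leaves (pathE w) := by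
            unfold dct
            rw [Multiset.countP_pos]
            exact ⟨_, hx, by simp, key x (pathE_mem _ _ hx).2 (pathE_ne w hw _ hx).symm⟩
          have c2 : 0 < dct (comb (b :: l')).leaves [a] (pathE w) := by
            unfold dct
            rw [Multiset.countP_pos]
            exact ⟨_, hy, key y (pathE_mem _ _ hy).1 (pathE_ne w hw _ hy), by simp⟩
          omega
      · rw [if_neg hN] at hp; exact absurd rfl hp

/-- index set of the dual bases -/
def IsW (S : Finset ℕ) (w : List ℕ) : Prop := w.Nodup ∧ w.toFinset = S ∧ w.getLast? = some 0

lemma IsW.tree {S : Finset ℕ} {w : List ℕ} (h : IsW S w) : IsTreeOn S (comb w) := by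
  obtain ⟨h1, h2, h3⟩ := h
  cases w with
  | nil => simp at h3
  | cons a l =>
    unfold IsTreeOn
    rw [comb_leaves, List.nodup_reverse, List.toFinset_reverse]
    exact ⟨h1, h2⟩

lemma rtg_symm {E : Multiset (ℕ × ℕ)} {a b : ℕ} (h : Relation.ReflTransGen (Adj E) a b) :
    Relation.ReflTransGen (Adj E) b a := by
  induction h with
  | refl => exact .refl
  | tail _ h ih => exact .head (Or.symm h) ih

lemma rtg_transfer {E E' : Multiset (ℕ × ℕ)}
    (hE : ∀ e ∈ E, Relation.ReflTransGen (Adj E') e.1 e.2)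
    {a b : ℕ} (h : Relation.ReflTransGen (Adj E) a b) : Relation.ReflTransGen (Adj E') a b := by
  induction h with
  | refl => exact .refl
  | tail _ h ih =>
    rcases h with h | h
    · exact ih.trans (hE _ h)
    · exact ih.trans (rtg_symm (hE _ h))

lemma rtg_of_mem {E : Multiset (ℕ × ℕ)} {e : ℕ × ℕ} (h : e ∈ E) :
    Relation.ReflTransGen (Adj E) e.1 e.2 := .single (Or.inl h)

lemma path_conn (a : ℕ) (l : List ℕ) (x : ℕ) (hx : x ∈ a :: l) :
    Relation.ReflTransGen (Adj (pathE (a :: l))) x a := by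
  induction l generalizing a x with
  | nil => simp at hx; subst hx; exact .refl
  | cons b l ih =>
    rcases List.mem_cons.1 hx with rfl | hx
    · exact .refl
    · refine (rtg_transfer (fun e he => rtg_of_mem ?_) (ih b x hx)).trans
        (rtg_of_mem (e := (b, a)) ?_)
      · exact Multiset.mem_cons_of_mem he
      · simp [pathE]

lemma IsW.graph {S : Finset ℕ} {w : List ℕ} (h : IsW S w) : IsGraphOn S (pathE w) := by
  obtain ⟨h1, h2, h3⟩ := h
  subst h2
  refine ⟨fun e he => ?_, ?_⟩
  · have := pathE_mem w e he
    exact ⟨by simpa using this.1, by simpa using this.2, pathE_ne w h1 e he⟩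
  · cases w with
    | nil => simp at h3
    | cons a l =>
      intro x hx y hy
      rw [List.mem_toFinset] at hx hy
      exact (path_conn a l x hx).trans (rtg_symm (path_conn a l y hy))

lemma pairPT_graph {S : Finset ℕ} {E : Multiset (ℕ × ℕ)} {t : PTree} (hE : IsGraphOn S E)
    (ht : IsTreeOn S t) : pairPT E t = pr t E := by
  apply pairPT_eq_pr t ht.1
  intro e he
  have := hE.1 e he
  rw [← ht.2] at this
  simpa using this

lemma W_finite (S : Finset ℕ) : Finite {w : List ℕ // IsW S w} := by
  apply Set.Finite.to_subtype (s := {w | IsW S w})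
  apply (List.finite_toSet (S.toList.permutations)).subset
  rintro w ⟨h1, h2, h3⟩
  refine List.mem_permutations.2 ?_
  rw [List.perm_ext_iff_of_nodup h1 S.nodup_toList]
  intro x
  rw [← h2]; simp

lemma perfect_half {R E L W : Type} [CommRing R] [AddCommGroup E] [Module R E] [AddCommGroup L]
    [Module R L] [Finite W] (p : E →ₗ[R] L →ₗ[R] R) (g : W → E) (t : W → L)
    (hg : Submodule.span R (Set.range g) = ⊤) (ht : Submodule.span R (Set.range t) = ⊤)
    (ε : W → R) (hε : ∀ w, ε w * ε w = 1)
    (hp : ∀ w w', p (g w) (t w') = if w = w' then ε w else 0) : Function.Bijective p := by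
  have := Fintype.ofFinite W
  constructor
  · rw [injective_iff_map_eq_zero]
    intro x hx
    have hxm : x ∈ Submodule.span R (Set.range g) := by rw [hg]; trivial
    obtain ⟨c, rfl⟩ := (Submodule.mem_span_range_iff_exists_fun R).1 hxm
    apply Finset.sum_eq_zero
    intro w _
    have h1 := LinearMap.congr_fun hx (t w)
    simp [hp] at h1
    have : c w = 0 := by
      calc c w = c w * ε w * ε w := by rw [mul_assoc, hε, mul_one]
        _ = 0 := by rw [h1, zero_mul]
    simp [this]
  · intro f
    refine ⟨∑ w, (ε w * f (t w)) • g w, ?_⟩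
    apply LinearMap.ext_on_range ht
    intro w
    simp [hp, mul_right_comm, hε]


/-! ### Part 4: combs span `Lie` -/

def qT (R : Type) [CommRing R] (S : Finset ℕ) (t : PTree) : LieQ R S :=
  if h : IsTreeOn S t then Submodule.Quotient.mk (Finsupp.single ⟨t, h⟩ 1) else 0

lemma isTreeOn_perm {S : Finset ℕ} {t t' : PTree} (h : t.leaves.Perm t'.leaves)
    (ht : IsTreeOn S t) : IsTreeOn S t' :=
  ⟨h.nodup_iff.1 ht.1, by rw [← ht.2]; exact (List.toFinset_eq_of_perm _ _ h).symm⟩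

lemma qT_symm (R : Type) [CommRing R] (S : Finset ℕ) (D A B : PTree) (m : ℕ)
    (hD : D.leaves.Nodup) (hm : m ∈ D.leaves) :
    qT R S (D.graft m (.node A B)) + qT R S (D.graft m (.node B A)) = 0 := by
  have hp : (D.graft m (.node A B)).leaves.Perm (D.graft m (.node B A)).leaves :=
    graft_perm D m List.perm_append_comm
  by_cases h : IsTreeOn S (D.graft m (.node A B))
  · have h' := isTreeOn_perm hp h
    rw [qT, qT, dif_pos h, dif_pos h', ← Submodule.Quotient.mk_add, Submodule.Quotient.mk_eq_zero]
    exact Submodule.subset_span (Or.inr ⟨D, A, B, m, ⟨_, h⟩, ⟨_, h'⟩, hD, hm, rfl, rfl, rfl⟩)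
  · have h' : ¬ IsTreeOn S (D.graft m (.node B A)) := fun h' => h (isTreeOn_perm hp.symm h')
    rw [qT, qT, dif_neg h, dif_neg h', add_zero]

lemma perm_cyc (A B C : PTree) : (PTree.node (.node A B) C).leaves.Perm
    (PTree.node (.node B C) A).leaves := by
  simp only [PTree.leaves, List.append_assoc]
  have := List.perm_append_comm (l₁ := A.leaves) (l₂ := B.leaves ++ C.leaves)
  simpa using this

lemma qT_jacobi (R : Type) [CommRing R] (S : Finset ℕ) (D A B C : PTree) (m : ℕ)
    (hD : D.leaves.Nodup) (hm : m ∈ D.leaves) :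
    qT R S (D.graft m (.node (.node A B) C)) + qT R S (D.graft m (.node (.node B C) A)) +
      qT R S (D.graft m (.node (.node C A) B)) = 0 := by
  have hp := graft_perm D m (perm_cyc A B C)
  have hp' := graft_perm D m (perm_cyc B C A)
  by_cases h : IsTreeOn S (D.graft m (.node (.node A B) C))
  · have h' := isTreeOn_perm hp h
    have h'' := isTreeOn_perm hp' h'
    rw [qT, qT, qT, dif_pos h, dif_pos h', dif_pos h'', ← Submodule.Quotient.mk_add,
      ← Submodule.Quotient.mk_add, Submodule.Quotient.mk_eq_zero]
    exact Submodule.subset_span (Or.inl ⟨D, A, B, C, m, ⟨_, h⟩, ⟨_, h'⟩, ⟨_, h''⟩, hD, hm,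
      rfl, rfl, rfl, rfl⟩)
  · have h' := fun h' => h (isTreeOn_perm hp.symm h')
    have h'' := fun h'' => h' (isTreeOn_perm hp'.symm h'')
    rw [qT, qT, qT, dif_neg h, dif_neg h', dif_neg h'', add_zero, add_zero]

abbrev fold (X : PTree) (zs : List PTree) : PTree := zs.foldl PTree.node X

lemma fold_leaves (X : PTree) (zs : List PTree) :
    (fold X zs).leaves = X.leaves ++ zs.flatMap PTree.leaves := by
  induction zs generalizing X with
  | nil => simp [fold]
  | cons z zs ih =>
    have := ih (.node X z)
    simp only [fold, PTree.leaves] at this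
    simp [fold, this]

lemma fold_graft (X : PTree) (zs : List PTree) (Y : PTree) (m : ℕ)
    (h : m ∉ zs.flatMap PTree.leaves) : (fold Y zs).graft m X = fold (Y.graft m X) zs := by
  induction zs generalizing Y with
  | nil => simp [fold]
  | cons z zs ih =>
    simp only [List.flatMap_cons, List.mem_append, not_or] at h
    have := ih (.node Y z) h.2
    simp only [fold] at this
    simp [fold, this, PTree.graft, graft_of_not_mem z m X h.1]

lemma ctx {S : Finset ℕ} {X : PTree} {zs : List PTree} (h : IsTreeOn S (fold X zs))
    (h0 : 0 ∈ X.leaves) : (fold (.leaf 0) zs).leaves.Nodup ∧ 0 ∈ (fold (.leaf 0) zs).leaves ∧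
      ∀ Y, fold Y zs = (fold (.leaf 0) zs).graft 0 Y := by
  have h1 := h.1
  rw [fold_leaves, List.nodup_append'] at h1
  have h2 : 0 ∉ zs.flatMap PTree.leaves := fun h => h1.2.2 h0 h
  refine ⟨?_, ?_, fun Y => ?_⟩
  · rw [fold_leaves]
    simp only [PTree.leaves, List.singleton_append, List.nodup_cons]
    exact ⟨h2, h1.2.1⟩
  · simp [fold_leaves, PTree.leaves]
  · rw [fold_graft _ _ _ _ h2]; simp [PTree.graft]

lemma fold_perm {X Y : PTree} (h : X.leaves.Perm Y.leaves) (zs : List PTree) :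
    (fold X zs).leaves.Perm (fold Y zs).leaves := by
  rw [fold_leaves, fold_leaves]; exact h.append_right _

lemma qT_symm' (R : Type) [CommRing R] (S : Finset ℕ) (A B : PTree) (zs : List PTree)
    (h0 : 0 ∈ A.leaves ∨ 0 ∈ B.leaves) :
    qT R S (fold (.node A B) zs) + qT R S (fold (.node B A) zs) = 0 := by
  by_cases h : IsTreeOn S (fold (.node A B) zs)
  · obtain ⟨h1, h2, h3⟩ := ctx h (by simpa [PTree.leaves] using h0)
    rw [h3, h3 (.node B A)]
    exact qT_symm R S _ A B 0 h1 h2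
  · have hp : (PTree.node A B).leaves.Perm (PTree.node B A).leaves := List.perm_append_comm
    rw [qT, qT, dif_neg h, dif_neg (fun h' => h (isTreeOn_perm (fold_perm hp zs).symm h')),
      add_zero]

lemma qT_jacobi' (R : Type) [CommRing R] (S : Finset ℕ) (A B C : PTree) (zs : List PTree)
    (h0 : 0 ∈ C.leaves) :
    qT R S (fold (.node (.node A B) C) zs) + qT R S (fold (.node (.node B C) A) zs) +
      qT R S (fold (.node (.node C A) B) zs) = 0 := by
  by_cases h : IsTreeOn S (fold (.node (.node A B) C) zs)
  · obtain ⟨h1, h2, h3⟩ := ctx h (by simp [PTree.leaves, h0])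
    rw [h3, h3 (.node (.node B C) A), h3 (.node (.node C A) B)]
    exact qT_jacobi R S _ A B C 0 h1 h2
  · have hp := perm_cyc A B C
    have hp' := perm_cyc B C A
    rw [qT, qT, qT, dif_neg h, dif_neg (fun h' => h (isTreeOn_perm (fold_perm hp zs).symm h')),
      dif_neg (fun h' => h (isTreeOn_perm (fold_perm (hp.trans hp') zs).symm h')),
      add_zero, add_zero]

lemma qT_expand (R : Type) [CommRing R] (S : Finset ℕ) (X A B : PTree) (zs : List PTree)
    (h0 : 0 ∈ X.leaves) :
    qT R S (fold (.node X (.node A B)) zs) =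
      qT R S (fold (.node (.node X A) B) zs) - qT R S (fold (.node (.node X B) A) zs) := by
  have e1 := qT_symm' R S X (.node A B) zs (Or.inl h0)
  have e2 := qT_jacobi' R S A B X zs h0
  have e3 := qT_symm' R S B X (A :: zs) (Or.inr h0)
  simp only [fold, List.foldl_cons] at e1 e2 e3 ⊢
  rw [eq_neg_of_add_eq_zero_left e1]
  rw [eq_neg_of_add_eq_zero_left e3] at e2
  rw [neg_eq_iff_add_eq_zero]
  rw [← e2]; abel

lemma comb_append (u : List ℕ) :
    comb (u.reverse ++ [0]) = fold (.leaf 0) (u.map PTree.leaf) := by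
  induction u using List.reverseRecOn with
  | nil => simp [comb, fold]
  | append_singleton u a ih =>
    rw [List.reverse_append, List.map_append]
    simp only [fold, List.foldl_append] at ih ⊢
    rw [← ih]
    simp only [List.reverse_singleton, List.singleton_append, List.map_cons, List.map_nil,
      List.foldl_cons, List.foldl_nil, List.cons_append]
    obtain ⟨b, l, hbl⟩ : ∃ b l, u.reverse ++ [0] = b :: l :=
      List.exists_cons_of_ne_nil (by simp)
    have e : ([] ++ u.reverse) ++ [0] = b :: l := by simpa using hbl
    rw [e, hbl]
    conv_lhs => rw [comb]

abbrev VT (R : Type) [CommRing R] (S : Finset ℕ) : Submodule R (LieQ R S) :=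
  Submodule.span R (Set.range (fun w : {w : List ℕ // IsW S w} => qT R S (comb w.1)))

lemma qT_comb_mem (R : Type) [CommRing R] (S : Finset ℕ) (u : List ℕ) :
    qT R S (fold (.leaf 0) (u.map PTree.leaf)) ∈ VT R S := by
  rw [← comb_append]
  by_cases h : IsTreeOn S (comb (u.reverse ++ [0]))
  · refine Submodule.subset_span ⟨⟨u.reverse ++ [0], ?_⟩, rfl⟩
    obtain ⟨b, l, hbl⟩ : ∃ b l, u.reverse ++ [0] = b :: l :=
      List.exists_cons_of_ne_nil (by simp)
    have hl : (u.reverse ++ [0]).getLast? = some 0 := by simp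
    rw [hbl] at h hl ⊢
    unfold IsTreeOn at h
    rw [comb_leaves, List.nodup_reverse, List.toFinset_reverse] at h
    exact ⟨h.1, h.2, hl⟩
  · rw [qT, dif_neg h]; exact Submodule.zero_mem _

lemma all_leaves (ys : List PTree) (h : ∀ A B, PTree.node A B ∉ ys) :
    ∃ u : List ℕ, ys = u.map PTree.leaf := by
  induction ys with
  | nil => exact ⟨[], rfl⟩
  | cons y ys ih =>
    obtain ⟨u, rfl⟩ := ih (fun A B hm => h A B (List.mem_cons_of_mem _ hm))
    cases y with
    | leaf a => exact ⟨a :: u, rfl⟩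
    | node A B => exact absurd (List.mem_cons_self) (h A B)

lemma qT_fold_mem (R : Type) [CommRing R] (S : Finset ℕ) (N : ℕ) (ys : List PTree)
    (hN : (ys.map (fun y => y.nodesList.length)).sum = N) :
    qT R S (fold (.leaf 0) ys) ∈ VT R S := by
  induction N generalizing ys with
  | zero =>
    obtain ⟨u, rfl⟩ := all_leaves ys (by
      intro A B hm
      have := List.sum_eq_zero_iff.1 hN _ (List.mem_map_of_mem hm)
      simp [PTree.nodesList] at this)
    exact qT_comb_mem R S u
  | succ N ih =>
    by_cases h : ∃ A B, PTree.node A B ∈ ys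
    · obtain ⟨A, B, hm⟩ := h
      obtain ⟨pre, post, rfl⟩ := List.append_of_mem hm
      have e := qT_expand R S (fold (.leaf 0) pre) A B post
        (by simp [fold_leaves, PTree.leaves])
      have h1 := ih (pre ++ A :: B :: post) (by
        simp [PTree.nodesList] at hN ⊢; omega)
      have h2 := ih (pre ++ B :: A :: post) (by
        simp [PTree.nodesList] at hN ⊢; omega)
      simp only [fold, List.foldl_append, List.foldl_cons] at e h1 h2 ⊢
      rw [e]
      exact Submodule.sub_mem _ h1 h2
    · push Not at h
      obtain ⟨u, rfl⟩ := all_leaves ys h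
      exact qT_comb_mem R S u

lemma qT_mem (R : Type) [CommRing R] (S : Finset ℕ) (T : PTree) (zs : List PTree)
    (h0 : 0 ∈ T.leaves) : qT R S (fold T zs) ∈ VT R S := by
  induction T generalizing zs with
  | leaf a =>
    simp [PTree.leaves] at h0
    subst h0
    exact qT_fold_mem R S _ zs rfl
  | node l r hl hr =>
    by_cases h : 0 ∈ l.leaves
    · exact hl (r :: zs) h
    · have h' : 0 ∈ r.leaves := by simp [PTree.leaves] at h0; tauto
      rw [eq_neg_of_add_eq_zero_left (qT_symm' R S l r zs (Or.inr h'))]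
      exact Submodule.neg_mem _ (hr (l :: zs) h')

lemma VT_top (R : Type) [CommRing R] (S : Finset ℕ) (hS : 0 ∈ S) : VT R S = ⊤ := by
  rw [eq_top_iff]
  rintro x -
  obtain ⟨α, rfl⟩ := Submodule.Quotient.mk_surjective _ x
  induction α using Finsupp.induction_linear with
  | zero => exact Submodule.zero_mem _
  | add f g hf hg => rw [Submodule.Quotient.mk_add]; exact Submodule.add_mem _ hf hg
  | single T a =>
    have : Finsupp.single T a = a • Finsupp.single T (1 : R) := by simp
    rw [this, Submodule.Quotient.mk_smul]
    apply Submodule.smul_mem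
    have h0 : 0 ∈ T.1.leaves := by rw [← List.mem_toFinset, T.2.2]; exact hS
    have := qT_mem R S T.1 [] h0
    rw [qT, dif_pos (show IsTreeOn S (fold T.1 []) from T.2)] at this
    exact this


/-! ### Part 5: long graphs span `Eil` -/

def qG (R : Type) [CommRing R] (S : Finset ℕ) (E : Multiset (ℕ × ℕ)) : EilQ R S :=
  if h : IsGraphOn S E then Submodule.Quotient.mk (Finsupp.single ⟨E, h⟩ 1) else 0

lemma conn_transfer {S : Finset ℕ} {E E' : Multiset (ℕ × ℕ)}
    (hE : ∀ e ∈ E, Relation.ReflTransGen (Adj E') e.1 e.2) (h : ConnOn S E) : ConnOn S E' :=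
  fun a ha b hb => rtg_transfer hE (h a ha b hb)

lemma isGraph_swap {S : Finset ℕ} {i j : ℕ} {E : Multiset (ℕ × ℕ)}
    (h : IsGraphOn S ((i, j) ::ₘ E)) : IsGraphOn S ((j, i) ::ₘ E) := by
  refine ⟨?_, conn_transfer ?_ h.2⟩
  · intro e he
    rcases Multiset.mem_cons.1 he with rfl | he
    · have := h.1 (i, j) (by simp)
      exact ⟨this.2.1, this.1, this.2.2.symm⟩
    · exact h.1 e (Multiset.mem_cons_of_mem he)
  · intro e he
    rcases Multiset.mem_cons.1 he with rfl | he
    · exact rtg_symm (rtg_of_mem (e := (j, i)) (by simp))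
    · exact rtg_of_mem (Multiset.mem_cons_of_mem he)

lemma qG_symm (R : Type) [CommRing R] (S : Finset ℕ) (i j : ℕ) (E : Multiset (ℕ × ℕ)) :
    qG R S ((i, j) ::ₘ E) + qG R S ((j, i) ::ₘ E) = 0 := by
  by_cases h : IsGraphOn S ((i, j) ::ₘ E)
  · have h' := isGraph_swap h
    rw [qG, qG, dif_pos h, dif_pos h', ← Submodule.Quotient.mk_add, Submodule.Quotient.mk_eq_zero]
    exact Submodule.subset_span (Or.inl (Or.inr ⟨i, j, E, ⟨_, h⟩, ⟨_, h'⟩, rfl, rfl, rfl⟩))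
  · rw [qG, qG, dif_neg h, dif_neg (fun h' => h (isGraph_swap h')), add_zero]

lemma qG_double (R : Type) [CommRing R] (S : Finset ℕ) (i j : ℕ) (E : Multiset (ℕ × ℕ)) :
    qG R S ((i, j) ::ₘ (i, j) ::ₘ E) = 0 := by
  by_cases h : IsGraphOn S ((i, j) ::ₘ (i, j) ::ₘ E)
  · rw [qG, dif_pos h, Submodule.Quotient.mk_eq_zero]
    exact Submodule.subset_span (Or.inr ⟨i, j, E, ⟨_, h⟩, Or.inl rfl, rfl⟩)
  · rw [qG, dif_neg h]

lemma isGraph_cyc {S : Finset ℕ} {i j k : ℕ} {E : Multiset (ℕ × ℕ)} (hik : i ≠ k)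
    (h : IsGraphOn S ((i, j) ::ₘ (j, k) ::ₘ E)) : IsGraphOn S ((j, k) ::ₘ (k, i) ::ₘ E) := by
  have h1 := h.1 (i, j) (by simp)
  have h2 := h.1 (j, k) (by simp)
  refine ⟨?_, conn_transfer ?_ h.2⟩
  · intro e he
    simp only [Multiset.mem_cons] at he
    rcases he with rfl | rfl | he
    · exact h2
    · exact ⟨h2.2.1, h1.1, hik.symm⟩
    · exact h.1 e (by simp [he])
  · have a1 := rtg_of_mem (E := (j, k) ::ₘ (k, i) ::ₘ E) (e := (j, k)) (by simp)
    have a2 := rtg_of_mem (E := (j, k) ::ₘ (k, i) ::ₘ E) (e := (k, i)) (by simp)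
    intro e he
    simp only [Multiset.mem_cons] at he
    rcases he with rfl | rfl | he
    · exact rtg_symm (a1.trans a2)
    · exact a1
    · exact rtg_of_mem (by simp [he])

lemma qG_arnold (R : Type) [CommRing R] (S : Finset ℕ) (i j k : ℕ) (E : Multiset (ℕ × ℕ))
    (hij : i ≠ j) (hjk : j ≠ k) (hik : i ≠ k) :
    qG R S ((i, j) ::ₘ (j, k) ::ₘ E) + qG R S ((j, k) ::ₘ (k, i) ::ₘ E) +
      qG R S ((k, i) ::ₘ (i, j) ::ₘ E) = 0 := by
  by_cases h : IsGraphOn S ((i, j) ::ₘ (j, k) ::ₘ E)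
  · have h' := isGraph_cyc hik h
    have h'' := isGraph_cyc hij.symm h'
    rw [qG, qG, qG, dif_pos h, dif_pos h', dif_pos h'', ← Submodule.Quotient.mk_add,
      ← Submodule.Quotient.mk_add, Submodule.Quotient.mk_eq_zero]
    exact Submodule.subset_span (Or.inl (Or.inl ⟨i, j, k, E, ⟨_, h⟩, ⟨_, h'⟩, ⟨_, h''⟩,
      hij, hjk, hik, rfl, rfl, rfl, rfl⟩))
  · have h'' := fun h'' => h (isGraph_cyc hjk.symm.symm.symm h'')
    have h' := fun h' => h'' (isGraph_cyc hij.symm h')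
    rw [qG, qG, qG, dif_neg h, dif_neg h', dif_neg h'', add_zero, add_zero]

abbrev VG (R : Type) [CommRing R] (S : Finset ℕ) : Submodule R (EilQ R S) :=
  Submodule.span R (Set.range (fun w : {w : List ℕ // IsW S w} => qG R S (pathE w.1)))

def deg (v : ℕ) (E : Multiset (ℕ × ℕ)) : ℕ := E.countP (fun e => e.1 = v ∨ e.2 = v)

lemma qG_finish (R : Type) [CommRing R] (S : Finset ℕ) (hS : 0 ∈ S) (w : List ℕ)
    (E : Multiset (ℕ × ℕ)) (hw : w.Nodup) (hl : w.getLast? = some 0)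
    (hE : ∀ e ∈ E, e.1 ∉ w ∧ e.2 ∉ w) : qG R S (pathE w + E) ∈ VG R S := by
  by_cases h : IsGraphOn S (pathE w + E)
  · have hall : ∀ b ∈ S, b ∈ w := by
      intro b hb
      have := h.2 0 hS b hb
      induction this with
      | refl => exact List.mem_of_getLast? hl
      | @tail b c hbc hc ih =>
        have hbS : b ∈ S := by
          rcases hc with hc | hc
          · exact (h.1 _ hc).1
          · exact (h.1 _ hc).2.1
        have ih := ih hbS
        rcases hc with hc | hc
        · rcases Multiset.mem_add.1 hc with hc | hc
          · exact (pathE_mem _ _ hc).2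
          · exact absurd ih (hE _ hc).1
        · rcases Multiset.mem_add.1 hc with hc | hc
          · exact (pathE_mem _ _ hc).1
          · exact absurd ih (hE _ hc).2
    have hE0 : E = 0 := by
      apply Multiset.eq_zero_of_forall_notMem
      intro e he
      exact (hE e he).1 (hall _ (h.1 e (Multiset.mem_add.2 (Or.inr he))).1)
    subst hE0
    rw [add_zero] at h ⊢
    refine Submodule.subset_span ⟨⟨w, hw, ?_, hl⟩, rfl⟩
    ext x
    rw [List.mem_toFinset]
    refine ⟨fun hx => ?_, hall x⟩
    by_cases hx0 : x = 0
    · rw [hx0]; exact hS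
    · obtain ⟨y, hy⟩ := pathE_in w x hx (by rw [hl]; simpa using Ne.symm hx0)
      exact (h.1 _ hy).2.1
  · rw [qG, dif_neg h]; exact Submodule.zero_mem _

lemma qG_orient (R : Type) [CommRing R] (S : Finset ℕ) (i j : ℕ) (E : Multiset (ℕ × ℕ))
    (V : Submodule R (EilQ R S)) (h : qG R S ((i, j) ::ₘ E) ∈ V) : qG R S ((j, i) ::ₘ E) ∈ V := by
  rw [eq_neg_of_add_eq_zero_right (qG_symm R S i j E)]
  exact Submodule.neg_mem _ h

lemma touch {v : ℕ} {E : Multiset (ℕ × ℕ)} (h : 0 < deg v E) :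
    ∃ u E1, E = (v, u) ::ₘ E1 ∨ E = (u, v) ::ₘ E1 := by
  obtain ⟨⟨a, b⟩, he, h'⟩ := Multiset.countP_pos.1 h
  obtain ⟨E1, rfl⟩ := Multiset.exists_cons_of_mem he
  clear h he
  rcases h' with h | h
  · simp at h; subst h; exact ⟨b, E1, Or.inl rfl⟩
  · simp at h; subst h; exact ⟨a, E1, Or.inr rfl⟩

lemma qG_mem (R : Type) [CommRing R] (S : Finset ℕ) (hS : 0 ∈ S) (N : ℕ) :
    ∀ (d : ℕ) (v : ℕ) (vs : List ℕ)
    (E : Multiset (ℕ × ℕ)) (_ : (v :: vs).Nodup) (_ : (v :: vs).getLast? = some 0)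
    (_ : ∀ e ∈ E, e.1 ∉ vs ∧ e.2 ∉ vs ∧ e.1 ≠ e.2) (_ : Multiset.card E = N) (_ : deg v E = d),
    qG R S (pathE (v :: vs) + E) ∈ VG R S := by
  induction N with
  | zero =>
    intro d v vs E hw hl hE hN hd
    obtain rfl := Multiset.card_eq_zero.1 hN
    exact qG_finish R S hS _ _ hw hl (by simp)
  | succ N ihN =>
    intro d
    induction d with
    | zero =>
      intro v vs E hw hl hE hN hd
      refine qG_finish R S hS _ _ hw hl ?_
      intro e he
      have h1 := Multiset.countP_eq_zero.1 hd e he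
      have h2 := hE e he
      simp only [List.mem_cons]
      tauto
    | succ d ihd =>
      intro v vs E hw hl hE hN hd
      -- reduce to the case of an outgoing edge
      suffices H : ∀ u E1, (∀ e ∈ (v, u) ::ₘ E1, e.1 ∉ vs ∧ e.2 ∉ vs ∧ e.1 ≠ e.2) →
          Multiset.card E1 = N → deg v E1 = d →
          qG R S (pathE (v :: vs) + (v, u) ::ₘ E1) ∈ VG R S by
        obtain ⟨u, E1, rfl | rfl⟩ := touch (v := v) (E := E) (by omega)
        · refine H u E1 hE (by simpa using hN) ?_
          simpa [deg] using hd
        · rw [Multiset.add_cons]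
          apply qG_orient
          rw [← Multiset.add_cons]
          refine H u E1 ?_ (by simpa using hN) (by simpa [deg] using hd)
          intro e he
          rcases Multiset.mem_cons.1 he with rfl | he
          · have := hE (u, v) (by simp)
            exact ⟨this.2.1, this.1, this.2.2.symm⟩
          · exact hE e (Multiset.mem_cons_of_mem he)
      clear hE hN hd E
      intro u E1 hE hN hd
      have hu := hE (v, u) (by simp)
      have hE1 : ∀ e ∈ E1, e.1 ∉ vs ∧ e.2 ∉ vs ∧ e.1 ≠ e.2 :=
        fun e he => hE e (Multiset.mem_cons_of_mem he)
      simp only at hu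
      rcases Nat.eq_zero_or_pos d with h0 | hpos
      · have : pathE (v :: vs) + (v, u) ::ₘ E1 = pathE (u :: v :: vs) + E1 := by
          simp [pathE]
        rw [this]
        refine ihN _ u (v :: vs) E1 ?_ (by simpa [List.getLast?_cons_cons] using hl) ?_ hN rfl
        · rw [List.nodup_cons]
          refine ⟨?_, hw⟩
          simp only [List.mem_cons, not_or]
          exact ⟨hu.2.2.symm, hu.2.1⟩
        · intro e he
          have h1 := Multiset.countP_eq_zero.1 (hd.trans h0) e he
          have h2 := hE1 e he
          simp only [List.mem_cons]
          tauto
      · -- at least two edges at `v`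
        suffices H : ∀ b E2, (∀ e ∈ (v, b) ::ₘ E2, e.1 ∉ vs ∧ e.2 ∉ vs ∧ e.1 ≠ e.2) →
            Multiset.card E2 + 1 = N → deg v E2 + 1 = d →
            qG R S (pathE (v :: vs) + (v, u) ::ₘ (v, b) ::ₘ E2) ∈ VG R S by
          obtain ⟨b, E2, rfl | rfl⟩ := touch (v := v) (E := E1) (by omega)
          · exact H b E2 hE1 (by simpa using hN) (by simpa [deg] using hd)
          · rw [Multiset.cons_swap, Multiset.add_cons]
            apply qG_orient
            rw [← Multiset.add_cons, Multiset.cons_swap]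
            refine H b E2 ?_ (by simpa using hN) (by simpa [deg] using hd)
            intro e he
            rcases Multiset.mem_cons.1 he with rfl | he
            · have := hE1 (b, v) (by simp)
              exact ⟨this.2.1, this.1, this.2.2.symm⟩
            · exact hE1 e (Multiset.mem_cons_of_mem he)
        clear hE1 hE hN hd E1
        intro b E2 hE hN hd
        have hb := hE (v, b) (by simp)
        simp only at hb
        have hE2 : ∀ e ∈ E2, e.1 ∉ vs ∧ e.2 ∉ vs ∧ e.1 ≠ e.2 :=
          fun e he => hE e (Multiset.mem_cons_of_mem he)
        by_cases hub : u = b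
        · subst hub
          rw [Multiset.add_cons, Multiset.add_cons, qG_double]
          exact Submodule.zero_mem _
        · have ha := qG_arnold R S u v b (pathE (v :: vs) + E2) hu.2.2.symm hb.2.2 hub
          rw [Multiset.add_cons, Multiset.add_cons]
          apply qG_orient
          rw [add_assoc] at ha
          rw [eq_neg_of_add_eq_zero_left ha]
          refine Submodule.neg_mem _ (Submodule.add_mem _ ?_ ?_)
          · rw [← Multiset.add_cons, ← Multiset.add_cons]
            refine ihd v vs _ hw hl ?_ (by simp; omega) ?_
            · intro e he
              simp only [Multiset.mem_cons] at he
              rcases he with rfl | rfl | he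
              · exact hb
              · exact ⟨hb.2.1, hu.2.1, Ne.symm hub⟩
              · exact hE2 e he
            · have := hu.2.2.symm
              have := hb.2.2.symm
              simp_all [deg]
          · rw [← Multiset.add_cons, ← Multiset.add_cons]
            refine ihd v vs _ hw hl ?_ (by simp; omega) ?_
            · intro e he
              simp only [Multiset.mem_cons] at he
              rcases he with rfl | rfl | he
              · exact ⟨hb.2.1, hu.2.1, Ne.symm hub⟩
              · exact ⟨hu.2.1, hu.1, hu.2.2.symm⟩
              · exact hE2 e he
            · have := hu.2.2.symm
              have := hb.2.2.symm
              simp_all [deg]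

lemma VG_top (R : Type) [CommRing R] (S : Finset ℕ) (hS : 0 ∈ S) : VG R S = ⊤ := by
  rw [eq_top_iff]
  rintro x -
  obtain ⟨α, rfl⟩ := Submodule.Quotient.mk_surjective _ x
  induction α using Finsupp.induction_linear with
  | zero => exact Submodule.zero_mem _
  | add f g hf hg => rw [Submodule.Quotient.mk_add]; exact Submodule.add_mem _ hf hg
  | single G a =>
    have : Finsupp.single G a = a • Finsupp.single G (1 : R) := by simp
    rw [this, Submodule.Quotient.mk_smul]
    apply Submodule.smul_mem
    have := qG_mem R S hS _ _ 0 [] G.1 (by simp) (by simp)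
      (fun e he => ⟨by simp, by simp, (G.2.1 e he).2.2⟩) rfl rfl
    have e : pathE [0] + G.1 = G.1 := by simp [pathE]
    rw [e, qG, dif_pos (show IsGraphOn S G.1 from G.2)] at this
    exact this

/-! ### Part 6: the pairing -/

def P0 (R : Type) [CommRing R] (S : Finset ℕ) : GammaF R S →ₗ[R] ThetaF R S →ₗ[R] R :=
  Finsupp.lsum R (fun G => (LinearMap.toSpanSingleton R (ThetaF R S →ₗ[R] R)
    (Finsupp.lsum R (fun T => LinearMap.toSpanSingleton R R ((pairPT G.1 T.1 : ℤ) : R)))))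

lemma P0_apply (R : Type) [CommRing R] (S : Finset ℕ) (β : GammaF R S) (α : ThetaF R S) :
    P0 R S β α = pairGT β α := by
  unfold P0 pairGT
  rw [Finsupp.lsum_apply]
  unfold Finsupp.sum
  rw [LinearMap.sum_apply]
  refine Finset.sum_congr rfl fun G _ => ?_
  simp [Finsupp.sum, Finset.mul_sum, mul_assoc]

lemma P0_single (R : Type) [CommRing R] (S : Finset ℕ) (G : GraphOn S) (T : TreeOn S) :
    P0 R S (Finsupp.single G 1) (Finsupp.single T 1) = ((pairPT G.1 T.1 : ℤ) : R) := by
  rw [P0_apply]; simp [pairGT]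

lemma P0_I (R : Type) [CommRing R] (S : Finset ℕ) (T : TreeOn S) :
    Isub R S ≤ LinearMap.ker ((P0 R S).flip (Finsupp.single T 1)) := by
  have hT := T.2
  rw [Isub, Submodule.span_le]
  rintro x ((⟨i, j, k, E, G1, G2, G3, hij, hjk, hik, e1, e2, e3, rfl⟩ |
    ⟨i, j, E, G1, G2, e1, e2, rfl⟩) | ⟨i, j, E, G, e, rfl⟩)
  · simp only [SetLike.mem_coe, LinearMap.mem_ker, LinearMap.flip_apply, map_add,
      P0_single, e1, e2, e3]
    have h1 := G1.2.1 (i, j) (by simp [e1])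
    have h2 := G1.2.1 (j, k) (by simp [e1])
    have := pairPT_arnold T.1 hT.1 i j k E (by simpa [← hT.2] using h1.1)
      (by simpa [← hT.2] using h2.1) (by simpa [← hT.2] using h2.2.1) hij hjk hik
    exact_mod_cast congrArg (Int.cast : ℤ → R) this
  · simp only [SetLike.mem_coe, LinearMap.mem_ker, LinearMap.flip_apply, map_add,
      P0_single, e1, e2]
    have h1 := G1.2.1 (i, j) (by simp [e1])
    obtain ⟨x, b, hx, _⟩ := nadir_some T.1 hT.1 i j (by simpa [← hT.2] using h1.1)
      (by simpa [← hT.2] using h1.2.1) h1.2.2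
    have := pairPT_flip T.1 (i, j) (j, i) E x b hx (by
      simp only; rw [nadir_swap T.1 hT.1 i j, hx]; rfl)
    exact_mod_cast congrArg (Int.cast : ℤ → R) this
  · simp only [SetLike.mem_coe, LinearMap.mem_ker, LinearMap.flip_apply, P0_single]
    have : pairPT G.1 T.1 = 0 := by
      rcases e with e | e
      · rw [e]; exact pairPT_double _ hT.1 _ _ _ rfl
      · rw [e]; refine pairPT_double _ hT.1 _ _ _ ?_
        simp only [nadirFst]
        rw [nadir_swap T.1 hT.1 i j, Option.map_map]; rfl
    rw [this]; simp

lemma P0_J (R : Type) [CommRing R] (S : Finset ℕ) (G : GraphOn S) :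
    Jsub R S ≤ LinearMap.ker (P0 R S (Finsupp.single G 1)) := by
  rw [Jsub, Submodule.span_le]
  rintro x (⟨D, A, B, C, m, T1, T2, T3, hD, hm, e1, e2, e3, rfl⟩ |
    ⟨D, A, B, m, T1, T2, hD, hm, e1, e2, rfl⟩)
  · simp only [SetLike.mem_coe, LinearMap.mem_ker, map_add, P0_single]
    rw [pairPT_graph G.2 T1.2, pairPT_graph G.2 T2.2, pairPT_graph G.2 T3.2, e1, e2, e3]
    have hnd := T1.2.1
    rw [e1] at hnd
    have hnd := graft_nodup_sub _ _ _ hm hnd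
    simp only [PTree.leaves, List.nodup_append', List.disjoint_append_left] at hnd
    obtain ⟨⟨_, _, hAB⟩, _, hAC, hBC⟩ := hnd
    have := pr_graft ![.node (.node A B) C, .node (.node B C) A, .node (.node C A) B] (by
        intro i j x
        fin_cases i <;> fin_cases j <;> simp [PTree.leaves] <;> tauto)
      (by intro E; simp [Fin.sum_univ_three]; exact pr_jacobi A B C hAB hBC hAC.symm E)
      D m hD hm G.1
    simp only [Fin.sum_univ_three] at this
    exact_mod_cast congrArg (Int.cast : ℤ → R) this
  · simp only [SetLike.mem_coe, LinearMap.mem_ker, map_add, P0_single]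
    rw [pairPT_graph G.2 T1.2, pairPT_graph G.2 T2.2, e1, e2]
    have := pr_graft ![.node A B, .node B A] (by
        intro i j x
        fin_cases i <;> fin_cases j <;> simp [PTree.leaves] <;> tauto)
      (by intro E; simp [Fin.sum_univ_two]; exact pr_symm A B E)
      D m hD hm G.1
    simp only [Fin.sum_univ_two] at this
    exact_mod_cast congrArg (Int.cast : ℤ → R) this

lemma P0_I' (R : Type) [CommRing R] (S : Finset ℕ) : Isub R S ≤ LinearMap.ker (P0 R S) := by
  intro x hx
  rw [LinearMap.mem_ker]
  apply Finsupp.lhom_ext'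
  intro T
  apply LinearMap.ext_ring
  exact P0_I R S T hx

lemma P0_J' (R : Type) [CommRing R] (S : Finset ℕ) (β : GammaF R S) :
    Jsub R S ≤ LinearMap.ker (P0 R S β) := by
  intro x hx
  rw [LinearMap.mem_ker]
  have : (P0 R S).flip x = 0 := by
    apply Finsupp.lhom_ext'
    intro G
    apply LinearMap.ext_ring
    exact P0_J R S G hx
  exact LinearMap.congr_fun this β

def P1 (R : Type) [CommRing R] (S : Finset ℕ) : GammaF R S →ₗ[R] LieQ R S →ₗ[R] R where
  toFun β := (Jsub R S).liftQ (P0 R S β) (P0_J' R S β)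
  map_add' β β' := by
    apply Submodule.linearMap_qext
    apply LinearMap.ext
    intro α
    exact LinearMap.congr_fun ((P0 R S).map_add β β') α
  map_smul' c β := by
    apply Submodule.linearMap_qext
    apply LinearMap.ext
    intro α
    exact LinearMap.congr_fun ((P0 R S).map_smul c β) α

def P2 (R : Type) [CommRing R] (S : Finset ℕ) : EilQ R S →ₗ[R] LieQ R S →ₗ[R] R :=
  (Isub R S).liftQ (P1 R S) (by
    intro x hx
    rw [LinearMap.mem_ker]
    apply Submodule.linearMap_qext
    have := P0_I' R S hx
    rw [LinearMap.mem_ker] at this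
    apply LinearMap.ext
    intro α
    exact LinearMap.congr_fun this α)

lemma P2_mk (R : Type) [CommRing R] (S : Finset ℕ) (β : GammaF R S) (α : ThetaF R S) :
    P2 R S (Submodule.Quotient.mk β) (Submodule.Quotient.mk α) = pairGT β α := by
  rw [← P0_apply]; rfl

lemma P2_dual (R : Type) [CommRing R] (S : Finset ℕ) (w w' : {w : List ℕ // IsW S w}) :
    P2 R S (qG R S (pathE w.1)) (qT R S (comb w'.1)) =
      if w = w' then (-1 : R) ^ (w.1.length - 1) else 0 := by
  rw [qG, qT, dif_pos w.2.graph, dif_pos w'.2.tree, P2_mk, ← P0_apply]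
  refine (P0_single R S ⟨_, w.2.graph⟩ ⟨_, w'.2.tree⟩).trans ?_
  simp only
  rw [pairPT_graph w.2.graph w'.2.tree]
  split_ifs with h
  · subst h
    rw [pr_self _ w.2.1]; push_cast; rfl
  · have : pr (comb w'.1) (pathE w.1) = 0 := by
      by_contra hp
      apply h
      apply Subtype.ext
      refine pr_off _ _ w.2.1 w'.2.1 w.2.2.2 w'.2.2.2 (fun x => ?_) hp
      rw [← List.mem_toFinset, ← List.mem_toFinset, w.2.2.1, w'.2.2.1]
    rw [this]; simp

/-- the configuration pairing descends to a well-defined bilinear pairing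
`Eil(n) × Lie(n) → R` and this pairing is perfect: both induced maps to the dual
modules are isomorphisms. -/
theorem perfect_pairing_Lie_Eil (R : Type) [CommRing R] (n : ℕ) (hn : 1 ≤ n) :
    ∃ p : EilQ R (Finset.range n) →ₗ[R] LieQ R (Finset.range n) →ₗ[R] R,
      (∀ (β : GammaF R (Finset.range n)) (α : ThetaF R (Finset.range n)),
        p (Submodule.Quotient.mk β) (Submodule.Quotient.mk α) = pairGT β α) ∧
      Function.Bijective p ∧ Function.Bijective p.flip := by
  have hS : 0 ∈ Finset.range n := Finset.mem_range.2 hn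
  have := W_finite (Finset.range n)
  have hε : ∀ w : {w : List ℕ // IsW (Finset.range n) w},
      (-1 : R) ^ (w.1.length - 1) * (-1 : R) ^ (w.1.length - 1) = 1 := fun w => by
    rw [← mul_pow]; simp
  refine ⟨P2 R _, P2_mk R _, ?_, ?_⟩
  · exact perfect_half (P2 R _) _ _ (VG_top R _ hS) (VT_top R _ hS) _ hε (fun w w' => by
      rw [P2_dual]; congr)
  · refine perfect_half (P2 R _).flip _ _ (VT_top R _ hS) (VG_top R _ hS) _ hε ?_
    intro w w'
    rw [LinearMap.flip_apply, P2_dual]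
    by_cases h : w = w'
    · subst h; simp
    · rw [if_neg h, if_neg (Ne.symm h)]

end GTPairing
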